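/- arXiv:math/9201217 — 8 statements merged into one kernel-verified Lean document; each statement's English description precedes it below -/
import Mathlib

section
/- Suppose the unit vectors u_1,…,u_m and positive weights c_1,…,c_m satisfy John's conditions, and let K = {x ∈ ℝ^n : ⟨x, u_i⟩ ≤ 1 for all i}. If E is the ellipsoid {x ∈ ℝ^n : Σ_{j=1}^n α_j^{-2} ⟨x−y, v_j⟩² ≤ 1}, for a point y ∈ ℝ^n, an orthonormal basis (v_j)_{j=1}^n of ℝ^n and positive reals (α_j)_{j=1}^n, and E ⊆ K, then ∏_{j=1}^n α_j ≤ 1. -/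
open Finset RealInnerProductSpace

/-!
The map `T` stretching by `α j` along `v j` carries the unit ball onto the ellipsoid up to the
translation by `y`, so `y + T (u i)` lies in the ellipsoid and `⟪y + T (u i), u i⟫ ≤ 1`. Averaging
with the weights `c i` removes `y` by centring, and the decomposition of the identity turns the
average of `⟪T (u i), u i⟫` into `trace T` and `∑ i, c i * ‖u i‖ ^ 2` into `trace id = n`. Hence
`∑ j, α j = trace T ≤ n`, and the arithmetic-geometric mean inequality gives `∏ j, α j ≤ 1`.
-/

theorem prod_le_one_of_sum_le_card {ι : Type*} [Fintype ι] {a : ι → ℝ} (ha : ∀ i, 0 ≤ a i)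
    (hsum : ∑ i, a i ≤ Fintype.card ι) : ∏ i, a i ≤ 1 :=
  calc ∏ i, a i ≤ ∏ i, Real.exp (a i - 1) :=
        prod_le_prod (fun i _ => ha i) fun i _ => by linarith [Real.add_one_le_exp (a i - 1)]
    _ = Real.exp (∑ i, a i - Fintype.card ι) := by
        rw [← Real.exp_sum, sum_sub_distrib, sum_const, card_univ, nsmul_one]
    _ ≤ 1 := Real.exp_le_one_iff.mpr (sub_nonpos.mpr hsum)

open InnerProductSpace (rankOne trace_rankOne)

variable {ι κ E : Type*} [Fintype ι] [Fintype κ] [NormedAddCommGroup E] [InnerProductSpace ℝ E]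

section DecompositionOfIdentity

variable [FiniteDimensional ℝ E] {u : κ → E} {c : κ → ℝ}

theorem sum_mul_inner_map_eq_trace (hb : ∀ x, ∑ i, (c i * ⟪u i, x⟫) • u i = x) (T : E →ₗ[ℝ] E) :
    ∑ i, c i * ⟪T (u i), u i⟫ = T.trace ℝ E := by
  have hT : T = ∑ i, c i • (rankOne ℝ (T (u i)) (u i)).toLinearMap := by
    ext x
    nth_rw 1 [← hb x]
    simp [mul_smul]
  rw [congrArg (LinearMap.trace ℝ E) hT]
  simp [trace_rankOne, real_inner_comm]

theorem sum_mul_norm_sq_eq_finrank (hb : ∀ x, ∑ i, (c i * ⟪u i, x⟫) • u i = x) :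
    ∑ i, c i * ‖u i‖ ^ 2 = Module.finrank ℝ E := by
  simpa using sum_mul_inner_map_eq_trace hb LinearMap.id

theorem trace_le_sum_of_inner_add_map_le_one (hc : ∀ i, 0 ≤ c i) (ha : ∑ i, c i • u i = 0)
    (hb : ∀ x, ∑ i, (c i * ⟪u i, x⟫) • u i = x) {y : E} {T : E →ₗ[ℝ] E}
    (hT : ∀ i, ⟪y + T (u i), u i⟫ ≤ 1) : T.trace ℝ E ≤ ∑ i, c i := by
  have hy : ∑ i, c i * ⟪y, u i⟫ = 0 := by
    simpa [inner_sum, real_inner_smul_right] using congrArg (⟪y, ·⟫) ha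
  calc T.trace ℝ E = ∑ i, c i * ⟪y + T (u i), u i⟫ := by
        simp only [inner_add_left, mul_add, sum_add_distrib, hy, zero_add,
          sum_mul_inner_map_eq_trace hb]
    _ ≤ ∑ i, c i := sum_le_sum fun i _ => mul_le_of_le_one_right (hc i) (hT i)

end DecompositionOfIdentity

section Ellipsoid

/-- The solid ellipsoid with centre `y` and semi-axes of length `α j > 0` in the directions
`v j`. -/
def ellipsoid (y : E) (v : OrthonormalBasis ι ℝ E) (α : ι → ℝ) : Set E :=
  {x | ∑ j, ((α j) ^ 2)⁻¹ * ⟪x - y, v j⟫ ^ 2 ≤ 1}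

/-- The linear map with eigenvectors `v j` and eigenvalues `α j`, used to parametrize the
ellipsoid with these semi-axes by the unit ball. -/
noncomputable def axisScaling (v : OrthonormalBasis ι ℝ E) (α : ι → ℝ) : E →ₗ[ℝ] E :=
  ∑ j, α j • (rankOne ℝ (v j) (v j)).toLinearMap

theorem inner_axisScaling (v : OrthonormalBasis ι ℝ E) (α : ι → ℝ) (w : E) (j : ι) :
    ⟪axisScaling v α w, v j⟫ = α j * ⟪w, v j⟫ := by
  classical
  simp [axisScaling, sum_inner, inner_smul_left, v.inner_eq_ite, real_inner_comm w]

theorem trace_axisScaling (v : OrthonormalBasis ι ℝ E) (α : ι → ℝ) :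
    (axisScaling v α).trace ℝ E = ∑ j, α j := by
  rw [LinearMap.trace_eq_sum_inner _ v]
  refine sum_congr rfl fun j _ => ?_
  rw [real_inner_comm, inner_axisScaling, v.inner_eq_one, mul_one]

theorem add_axisScaling_mem_ellipsoid_iff {v : OrthonormalBasis ι ℝ E} {α : ι → ℝ}
    (hα : ∀ j, α j ≠ 0) (y w : E) : y + axisScaling v α w ∈ ellipsoid y v α ↔ ‖w‖ ≤ 1 := by
  have hnorm : ∑ j, ((α j) ^ 2)⁻¹ * ⟪axisScaling v α w, v j⟫ ^ 2 = ‖w‖ ^ 2 := by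
    rw [← v.sum_sq_norm_inner_left w]
    refine sum_congr rfl fun j _ => ?_
    rw [inner_axisScaling, mul_pow, inv_mul_cancel_left₀ (pow_ne_zero 2 (hα j)),
      Real.norm_eq_abs, sq_abs]
  rw [ellipsoid, Set.mem_ofPred_eq, add_sub_cancel_left, hnorm, sq_le_one_iff₀ (norm_nonneg w)]

end Ellipsoid

theorem stmt_0_general {u : κ → E} {c : κ → ℝ} (hu : ∀ i, ‖u i‖ = 1) (hc : ∀ i, 0 ≤ c i)
    (ha : ∑ i, c i • u i = 0) (hb : ∀ x, ∑ i, (c i * ⟪u i, x⟫) • u i = x) {y : E}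
    {v : OrthonormalBasis ι ℝ E} {α : ι → ℝ} (hα : ∀ j, 0 < α j)
    (hEK : ellipsoid y v α ⊆ {x | ∀ i, ⟪x, u i⟫ ≤ 1}) : ∏ j, α j ≤ 1 := by
  have : FiniteDimensional ℝ E := v.toBasis.finiteDimensional_of_finite
  have hT (i : κ) : ⟪y + axisScaling v α (u i), u i⟫ ≤ 1 :=
    hEK ((add_axisScaling_mem_ellipsoid_iff (fun j => (hα j).ne') y (u i)).mpr (hu i).le) i
  have hcard : ∑ i, c i = Fintype.card ι := by
    simpa [hu, Module.finrank_eq_card_basis v.toBasis] using sum_mul_norm_sq_eq_finrank hb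
  have hsum : ∑ j, α j ≤ Fintype.card ι := by
    rw [← trace_axisScaling v α, ← hcard]
    exact trace_le_sum_of_inner_add_map_le_one hc ha hb hT
  exact prod_le_one_of_sum_le_card (fun j => (hα j).le) hsum

/-- The 'if' part of John's theorem (Proposition 1, inequality part):
if the unit vectors `u i` and positive weights `c i` satisfy John's conditions,
and the ellipsoid `E` (with semi-axes `α j` along the orthonormal basis `v`,
centred at `y`) is contained in `K = {x : ⟪x, u i⟫ ≤ 1 ∀ i}`, then `∏ j, α j ≤ 1`. -/
theorem stmt_0 {n m : ℕ} (hn : 1 ≤ n) (hm : 1 ≤ m)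
    (u : Fin m → EuclideanSpace ℝ (Fin n)) (c : Fin m → ℝ)
    (hu : ∀ i, ‖u i‖ = 1) (hc : ∀ i, 0 < c i)
    (ha : ∑ i, c i • u i = 0)
    (hb : ∀ x : EuclideanSpace ℝ (Fin n), ∑ i, (c i * ⟪u i, x⟫) • u i = x)
    (y : EuclideanSpace ℝ (Fin n))
    (v : OrthonormalBasis (Fin n) ℝ (EuclideanSpace ℝ (Fin n)))
    (α : Fin n → ℝ) (hα : ∀ j, 0 < α j)
    (hEK : {x : EuclideanSpace ℝ (Fin n) |
        ∑ j, ((α j) ^ 2)⁻¹ * ⟪x - y, v j⟫ ^ 2 ≤ 1} ⊆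
      {x : EuclideanSpace ℝ (Fin n) | ∀ i, ⟪x, u i⟫ ≤ 1}) :
    ∏ j, α j ≤ 1 :=
  stmt_0_general hu (fun i => (hc i).le) ha hb hα hEK
end

section
/- Suppose the unit vectors u_1,…,u_m and positive weights c_1,…,c_m satisfy John's conditions, and let K = {x ∈ ℝ^n : ⟨x, u_i⟩ ≤ 1 for all i}. Then every x ∈ K satisfies ‖x‖ ≤ n; that is, K is contained in the Euclidean ball of radius n centred at the origin. -/
open Finset RealInnerProductSpace

/-!
For `x ∈ K` the numbers `tᵢ = ⟪uᵢ, x⟫` lie in `[-‖x‖, 1]`: above by the definition of `K`, below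
by Cauchy–Schwarz. Under the weights `cᵢ` they have mean zero, by the centering condition, and
second moment `∑ cᵢ tᵢ² = ‖x‖²`, by the decomposition of the identity. The Bhatia–Davis inequality
bounds this second moment by `‖x‖ ∑ cᵢ`, so `‖x‖ ≤ ∑ cᵢ`, and taking the trace of the decomposition
of the identity gives `∑ cᵢ = n`.
-/

section BhatiaDavis

variable {ι R : Type*} [Fintype ι] [CommRing R] [PartialOrder R] [IsOrderedRing R]

/-- The Bhatia–Davis inequality. -/
lemma sum_mul_sq_le_of_sum_mul_eq_zero {w t : ι → R} {a b : R} (hw : ∀ i, 0 ≤ w i)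
    (hmean : ∑ i, w i * t i = 0) (ha : ∀ i, a ≤ t i) (hb : ∀ i, t i ≤ b) :
    ∑ i, w i * t i ^ 2 ≤ -a * b * ∑ i, w i := by
  have hnonneg : 0 ≤ ∑ i, w i * ((b - t i) * (t i - a)) :=
    sum_nonneg fun i _ ↦
      mul_nonneg (hw i) (mul_nonneg (sub_nonneg.2 (hb i)) (sub_nonneg.2 (ha i)))
  have hexpand : ∑ i, w i * ((b - t i) * (t i - a)) =
      -a * b * ∑ i, w i + (a + b) * ∑ i, w i * t i - ∑ i, w i * t i ^ 2 := by
    simp_rw [mul_sum, ← sum_add_distrib, ← sum_sub_distrib]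
    exact sum_congr rfl fun i _ ↦ by ring
  rwa [hexpand, hmean, mul_zero, add_zero, sub_nonneg] at hnonneg

end BhatiaDavis

section JohnDecomposition

variable {ι E : Type*} [Fintype ι] [NormedAddCommGroup E] [InnerProductSpace ℝ E]
  {u : ι → E} {c : ι → ℝ}

/-- The decomposition of the identity `∑ i, c i • (u i ⊗ u i) = 1` of John's conditions, stated
pointwise. Neither unit length of the `u i` nor positivity of the `c i` is part of the notion. -/
def IsIdentityDecomposition (u : ι → E) (c : ι → ℝ) : Prop :=
  ∀ x, ∑ i, (c i * ⟪u i, x⟫) • u i = x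

namespace IsIdentityDecomposition

lemma sum_mul_inner_sq (h : IsIdentityDecomposition u c) (x : E) :
    ∑ i, c i * ⟪u i, x⟫ ^ 2 = ‖x‖ ^ 2 := calc
  ∑ i, c i * ⟪u i, x⟫ ^ 2 = ⟪∑ i, (c i * ⟪u i, x⟫) • u i, x⟫ := by
    simp only [sum_inner, real_inner_smul_left, sq, mul_assoc]
  _ = ‖x‖ ^ 2 := by rw [h x, real_inner_self_eq_norm_sq]

lemma sum_mul_norm_sq [FiniteDimensional ℝ E] (h : IsIdentityDecomposition u c) :
    ∑ i, c i * ‖u i‖ ^ 2 = Module.finrank ℝ E := by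
  have hid : ∑ i, c i • (InnerProductSpace.rankOne ℝ (u i) (u i) : E →ₗ[ℝ] E) = .id := by
    ext x
    simpa [smul_smul] using h x
  simpa [InnerProductSpace.trace_rankOne] using congrArg (LinearMap.trace ℝ E) hid

lemma sum_eq_finrank [FiniteDimensional ℝ E] (h : IsIdentityDecomposition u c)
    (hu : ∀ i, ‖u i‖ = 1) : ∑ i, c i = Module.finrank ℝ E := by
  simpa [hu] using h.sum_mul_norm_sq

lemma norm_le_sum (h : IsIdentityDecomposition u c) (hu : ∀ i, ‖u i‖ ≤ 1) (hc : ∀ i, 0 ≤ c i)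
    (hcenter : ∑ i, c i • u i = 0) {x : E} (hx : ∀ i, ⟪u i, x⟫ ≤ 1) :
    ‖x‖ ≤ ∑ i, c i := by
  have hmean : ∑ i, c i * ⟪u i, x⟫ = 0 := by
    simp only [← real_inner_smul_left, ← sum_inner, hcenter, inner_zero_left]
  have hlower (i : ι) : -‖x‖ ≤ ⟪u i, x⟫ :=
    neg_le_of_abs_le <| (abs_real_inner_le_norm _ _).trans <|
      mul_le_of_le_one_left (norm_nonneg x) (hu i)
  have hsq : ‖x‖ ^ 2 ≤ ‖x‖ * ∑ i, c i := by
    simpa [h.sum_mul_inner_sq] using sum_mul_sq_le_of_sum_mul_eq_zero hc hmean hlower hx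
  obtain hzero | hpos := (norm_nonneg x).eq_or_lt
  · exact hzero ▸ sum_nonneg fun i _ ↦ hc i
  · exact le_of_mul_le_mul_left (sq ‖x‖ ▸ hsq) hpos

end IsIdentityDecomposition

theorem stmt_4_general [FiniteDimensional ℝ E] (hu : ∀ i, ‖u i‖ = 1) (hc : ∀ i, 0 ≤ c i)
    (ha : ∑ i, c i • u i = 0) (hb : IsIdentityDecomposition u c) {x : E}
    (hx : ∀ i, ⟪u i, x⟫ ≤ 1) : ‖x‖ ≤ Module.finrank ℝ E :=
  (hb.norm_le_sum (fun i ↦ (hu i).le) hc ha hx).trans_eq (hb.sum_eq_finrank hu)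

end JohnDecomposition

/-- Under John's conditions, the set `K = {x : ⟪x, u i⟫ ≤ 1 ∀ i}` is
contained in the Euclidean ball of radius `n` about the origin. -/
theorem stmt_4 {n m : ℕ} (hn : 1 ≤ n) (hm : 1 ≤ m)
    (u : Fin m → EuclideanSpace ℝ (Fin n)) (c : Fin m → ℝ)
    (hu : ∀ i, ‖u i‖ = 1) (hc : ∀ i, 0 < c i)
    (ha : ∑ i, c i • u i = 0)
    (hb : ∀ x : EuclideanSpace ℝ (Fin n), ∑ i, (c i * ⟪u i, x⟫) • u i = x)
    (x : EuclideanSpace ℝ (Fin n)) (hx : ∀ i, ⟪x, u i⟫ ≤ 1) :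
    ‖x‖ ≤ n := by
  simpa using stmt_4_general hu (fun i ↦ (hc i).le) ha hb
    fun i ↦ (real_inner_comm x (u i)).trans_le (hx i)
end

section
/- Let x_1,…,x_m be points in ℝ^k (k ≥ 1, m ≥ 1) with ‖x_i − x_j‖ ≤ d for all i, j. Then there exists a point x ∈ ℝ^k such that ‖x_i − x‖ ≤ d · √(k / (2(k+1))) for all i. -/
/-!
The variance `½ ∑ᵢⱼ wᵢ wⱼ dist (pᵢ, pⱼ)²` of finitely many points is a concave function of the
weights: along a segment it exceeds its linear interpolation by `t (1 - t)` times the squared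
distance between the two barycentres. Comparing weights that maximize it on the simplex with the
vertices, where it vanishes, shows that every point lies within the square root of the maximum from
the barycentre. The diagonal of the double sum vanishes, so the maximum is at most
`d² / 2 * (1 - ∑ wᵢ²)`, and the Cauchy-Schwarz inequality bounds `∑ wᵢ²` from below. This gives the
radius for at most `n + 1` points, and Helly's theorem for closed balls passes to all of them.
-/

open Finset RealInnerProductSpace

section Variance

variable {ι P : Type*} [Fintype ι] {w v : ι → ℝ}

/-- The variance of the points `p i` under weights `w` of total mass one, written through pairwise
distances so that it makes sense in any metric space. -/
noncomputable def weightedVariance [PseudoMetricSpace P] (p : ι → P) (w : ι → ℝ) : ℝ :=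
  (∑ i, ∑ j, w i * w j * dist (p i) (p j) ^ 2) / 2

section PseudoMetricSpace

variable [PseudoMetricSpace P] {p : ι → P}

lemma continuous_weightedVariance : Continuous (weightedVariance p) := by
  unfold weightedVariance
  fun_prop

lemma weightedVariance_single [DecidableEq ι] (j : ι) :
    weightedVariance p (Pi.single j 1) = 0 := by
  simp [weightedVariance, Pi.single_apply]

lemma weightedVariance_le_mul_one_sub_sum_sq (hw : w ∈ stdSimplex ℝ ι) {d : ℝ}
    (hd : ∀ i j, dist (p i) (p j) ≤ d) :
    weightedVariance p w ≤ d ^ 2 / 2 * (1 - ∑ i, w i ^ 2) := by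
  classical
  have hterm (i j : ι) : w i * w j * dist (p i) (p j) ^ 2 ≤
      d ^ 2 * (w i * w j) - if i = j then d ^ 2 * w i ^ 2 else 0 := by
    split_ifs with hij
    · subst hij
      simp [sq]
    · have hww : 0 ≤ w i * w j := mul_nonneg (hw.1 i) (hw.1 j)
      calc w i * w j * dist (p i) (p j) ^ 2 ≤ w i * w j * d ^ 2 := by gcongr; exact hd i j
        _ = d ^ 2 * (w i * w j) - 0 := by ring
  calc weightedVariance p w
    _ ≤ (∑ i, ∑ j, (d ^ 2 * (w i * w j) - if i = j then d ^ 2 * w i ^ 2 else 0)) / 2 := by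
      unfold weightedVariance
      gcongr with i _ j _
      exact hterm i j
    _ = d ^ 2 / 2 * (1 - ∑ i, w i ^ 2) := by
      simp only [sum_sub_distrib, sum_ite_eq, mem_univ, if_true, ← mul_sum, hw.2, mul_one]
      ring

lemma weightedVariance_le_of_card_le (hw : w ∈ stdSimplex ℝ ι) {d : ℝ}
    (hd : ∀ i j, dist (p i) (p j) ≤ d) {n : ℕ} (hn : Fintype.card ι ≤ n + 1) :
    weightedVariance p w ≤ d ^ 2 * (n / (2 * (n + 1))) := by
  have hcauchy : 1 ≤ Fintype.card ι * ∑ i, w i ^ 2 := by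
    simpa [hw.2] using sq_sum_le_card_mul_sum_sq (s := univ) (f := w)
  have hsum_sq : 1 / (n + 1 : ℝ) ≤ ∑ i, w i ^ 2 := by
    rw [div_le_iff₀' (by positivity)]
    refine hcauchy.trans ?_
    gcongr
    exact_mod_cast hn
  calc weightedVariance p w ≤ d ^ 2 / 2 * (1 - ∑ i, w i ^ 2) :=
        weightedVariance_le_mul_one_sub_sum_sq hw hd
    _ ≤ d ^ 2 / 2 * (1 - 1 / (n + 1)) := by gcongr
    _ = d ^ 2 * (n / (2 * (n + 1))) := by field_simp; ring

end PseudoMetricSpace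

variable {V : Type*} [NormedAddCommGroup V] [InnerProductSpace ℝ V] [MetricSpace P]
  [NormedAddTorsor V P] {p : ι → P}

lemma weightedVariance_lineMap (hw : ∑ i, w i = 1) (hv : ∑ i, v i = 1) (t : ℝ) :
    weightedVariance p (AffineMap.lineMap w v t) =
      (1 - t) * weightedVariance p w + t * weightedVariance p v +
        t * (1 - t) *
          dist (univ.affineCombination ℝ p w) (univ.affineCombination ℝ p v) ^ 2 := by
  rw [sq (dist (univ.affineCombination ℝ p w) _), EuclideanGeometry.dist_affineCombination p hw hv]
  simp only [weightedVariance, AffineMap.lineMap_apply_module, ← sum_neg_distrib, sum_div, mul_sum,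
    ← sum_add_distrib]
  refine sum_congr rfl fun i _ => sum_congr rfl fun j _ => ?_
  simp only [Pi.add_apply, Pi.sub_apply, Pi.smul_apply, smul_eq_mul]
  ring

lemma dist_affineCombination_sq_le_of_isMaxOn (hw : w ∈ stdSimplex ℝ ι) (hv : v ∈ stdSimplex ℝ ι)
    (hmax : IsMaxOn (weightedVariance p) (stdSimplex ℝ ι) w) :
    dist (univ.affineCombination ℝ p w) (univ.affineCombination ℝ p v) ^ 2 ≤
      weightedVariance p w - weightedVariance p v := by
  set D := dist (univ.affineCombination ℝ p w) (univ.affineCombination ℝ p v) ^ 2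
  have hsegment {s : ℝ} (hs0 : 0 ≤ s) (hs1 : s < 1) :
      s * D ≤ weightedVariance p w - weightedVariance p v := by
    have hle := isMaxOn_iff.mp hmax _ ((convex_stdSimplex ℝ ι).lineMap_mem hw hv
      (t := 1 - s) ⟨by linarith, by linarith⟩)
    rw [weightedVariance_lineMap hw.2 hv.2] at hle
    refine le_of_mul_le_mul_left ?_ (sub_pos.mpr hs1)
    linear_combination hle
  -- Let `s → 1` in `hsegment`.
  rw [← one_mul D]
  exact mul_le_of_forall_lt_of_nonneg zero_le_one (sub_nonneg.mpr (hmax hv))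
    fun s hs0 hs1 b _ hb => (by gcongr : s * b ≤ s * D).trans (hsegment hs0 hs1)

lemma dist_sq_le_weightedVariance_of_isMaxOn (hw : w ∈ stdSimplex ℝ ι)
    (hmax : IsMaxOn (weightedVariance p) (stdSimplex ℝ ι) w) (j : ι) :
    dist (p j) (univ.affineCombination ℝ p w) ^ 2 ≤ weightedVariance p w := by
  classical
  have h := dist_affineCombination_sq_le_of_isMaxOn hw (single_mem_stdSimplex ℝ j) hmax
  rwa [univ.affineCombination_piSingle ℝ p (mem_univ j), weightedVariance_single, sub_zero,
    dist_comm] at h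

lemma exists_dist_affineCombination_le_of_card_le [Nonempty ι] {d : ℝ}
    (hd : ∀ i j, dist (p i) (p j) ≤ d) {n : ℕ} (hn : Fintype.card ι ≤ n + 1) :
    ∃ w ∈ stdSimplex ℝ ι,
      ∀ i, dist (p i) (univ.affineCombination ℝ p w) ≤ d * √(n / (2 * (n + 1))) := by
  classical
  let i₀ : ι := Classical.arbitrary ι
  have hd0 : 0 ≤ d := dist_nonneg.trans (hd i₀ i₀)
  obtain ⟨w, hw, hmax⟩ := (isCompact_stdSimplex ℝ ι).exists_isMaxOn
    ⟨_, single_mem_stdSimplex ℝ i₀⟩ (continuous_weightedVariance (p := p)).continuousOn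
  refine ⟨w, hw, fun i => le_of_sq_le_sq ?_ (by positivity)⟩
  calc dist (p i) (univ.affineCombination ℝ p w) ^ 2 ≤ weightedVariance p w :=
        dist_sq_le_weightedVariance_of_isMaxOn hw hmax i
    _ ≤ d ^ 2 * (n / (2 * (n + 1))) := weightedVariance_le_of_card_le hw hd hn
    _ = (d * √(n / (2 * (n + 1)))) ^ 2 := by rw [mul_pow, Real.sq_sqrt (by positivity)]

end Variance

theorem stmt_5_general {ι E : Type*} [NormedAddCommGroup E] [InnerProductSpace ℝ E]
    [FiniteDimensional ℝ E] (x : ι → E) (d : ℝ) (hdiam : ∀ i j, ‖x i - x j‖ ≤ d) :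
    ∃ z : E, ∀ i, ‖x i - z‖ ≤
      d * √(Module.finrank ℝ E / (2 * (Module.finrank ℝ E + 1))) := by
  set r := d * √(Module.finrank ℝ E / (2 * (Module.finrank ℝ E + 1)))
  simp only [← dist_eq_norm] at hdiam ⊢
  have hballs : (⋂ i, Metric.closedBall (x i) r).Nonempty := by
    refine Convex.helly_theorem_compact' (𝕜 := ℝ) (fun i => convex_closedBall (x i) r)
      (fun i => isCompact_closedBall (x i) r) fun I hI => ?_
    rcases I.eq_empty_or_nonempty with rfl | hne
    · simp
    have : Nonempty I := hne.to_subtype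
    obtain ⟨w, -, hw⟩ := exists_dist_affineCombination_le_of_card_le (p := fun i : I => x i)
      (fun i j => hdiam i j) ((Fintype.card_coe I).trans_le hI)
    exact ⟨_, Set.mem_iInter₂.mpr fun i hi => Metric.mem_closedBall'.mpr (hw ⟨i, hi⟩)⟩
  obtain ⟨z, hz⟩ := hballs
  exact ⟨z, fun i => Metric.mem_closedBall'.mp (Set.mem_iInter.mp hz i)⟩

/-- Lemma 3 (Jung-type bound via Caratheodory): a finite set of points in `ℝ^k`
of diameter at most `d` is contained in a ball of radius `d * √(k / (2(k+1)))`. -/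
theorem stmt_5 {k m : ℕ} (hk : 1 ≤ k) (hm : 1 ≤ m)
    (x : Fin m → EuclideanSpace ℝ (Fin k)) (d : ℝ) (hd : 0 ≤ d)
    (hdiam : ∀ i j, ‖x i - x j‖ ≤ d) :
    ∃ z : EuclideanSpace ℝ (Fin k),
      ∀ i, ‖x i - z‖ ≤ d * Real.sqrt (k / (2 * (k + 1))) := by
  simpa only [finrank_euclideanSpace_fin] using stmt_5_general x d hdiam
end

section
/- Let T ⊂ ℝ^n be a regular solid simplex of internal radius 1, given as T = {x ∈ ℝ^n : ⟨x, u_i⟩ ≤ 1, 1 ≤ i ≤ n+1} where the u_i satisfy the regular-simplex conditions. Let 1 ≤ k ≤ n−1, and suppose a k-dimensional Euclidean ball E = {x ∈ ℝ^n : Σ_{j=1}^k ⟨x−y, v_j⟩² ≤ r², and ⟨x−y, v_j⟩ = 0 for k+1 ≤ j ≤ n}, for some y ∈ ℝ^n, r > 0 and orthonormal basis (v_j)_{j=1}^n, is contained in T. Then r ≤ √(n(n+1)/(k(k+1))). -/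
open Finset RealInnerProductSpace

/-!
Projecting the normals `u i` onto the direction space `U` of the ball gives a centered tight frame
`w` of `U` with the same frame bound `K`. The ball of radius `r` centered at `y` lies in the
half-space `⟪x, u i⟫ ≤ h i` exactly when `⟪y, u i⟫ + r * ‖w i‖ ≤ h i`; summing over `i` eliminates
`y` and leaves `r * S ≤ ∑ i, h i`, where `S = ∑ i, ‖w i‖`. It remains to see that
`K * d * (d + 1) ≤ S ^ 2`, where `d = dim U`.

Heuristically, `A = ∑ i, ‖w i‖⁻¹ • w i ⊗ w i` has trace `S`. Since `∑ i, w i = 0`, the vectors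
`(w i, ‖w i‖) / √‖w i‖` in `U × ℝ` have second moment operator `A ⊕ S`, so
`⟪A⁻¹ w i, w i⟫ / ‖w i‖ + ‖w i‖ / S ≤ 1`. Multiplying by `‖w i‖` and summing yields
`K * tr A⁻¹ ≤ S - K * d / S`, while `tr A⁻¹ ≥ d ^ 2 / S`. Replacing `A⁻¹` by its lower bound
`2 * (d / S) - (d / S) ^ 2 • A` turns this into the positivity of a sum of squares.
-/

/-- A finite family `u` is a centered tight frame with bound `K` if it sums to zero and its
frame operator `∑ i, u i ⊗ u i` is `K` times the identity. For unit vectors these are the two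
conditions of John's theorem, with equal weights. -/
structure IsCenteredTightFrame {ι E : Type*} [Fintype ι] [NormedAddCommGroup E]
    [InnerProductSpace ℝ E] (K : ℝ) (u : ι → E) : Prop where
  sum_eq_zero : ∑ i, u i = 0
  sum_inner_smul : ∀ x, ∑ i, ⟪u i, x⟫ • u i = K • x

section

variable {ι E : Type*} [Fintype ι] [NormedAddCommGroup E] [InnerProductSpace ℝ E]

-- With `S = ∑ j, ‖w j‖`, this is `S ^ 2` times
-- `2 * (c / S) * ‖w i‖ ^ 2 - (c / S) ^ 2 * ⟪A w i, w i⟫ ≤ ‖w i‖ - ‖w i‖ ^ 2 / S`.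
-- If `w j = 0`, then the quotient with denominator `‖w j‖` is `0`, as the argument needs.
lemma two_mul_add_one_mul_sum_norm_mul_norm_sq_le {w : ι → E} (hw : ∑ i, w i = 0) (c : ℝ)
    (i : ι) :
    (2 * c + 1) * (∑ j, ‖w j‖) * ‖w i‖ ^ 2 ≤
      (∑ j, ‖w j‖) ^ 2 * ‖w i‖ + c ^ 2 * ∑ j, ⟪w i, w j⟫ ^ 2 / ‖w j‖ := by
  classical
  set S := ∑ j, ‖w j‖ with hS
  have hrow : ∑ j, ⟪w i, w j⟫ = 0 := by rw [← inner_sum, hw, inner_zero_right]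
  let t : ι → ℝ := fun j => (if i = j then S else 0) - c * (⟪w i, w j⟫ / ‖w j‖) - ‖w i‖
  have expand (j : ι) : ‖w j‖ * t j ^ 2 =
      (if i = j then S ^ 2 * ‖w j‖ - 2 * S * c * ⟪w i, w j⟫ - 2 * S * ‖w i‖ * ‖w j‖ else 0)
        + c ^ 2 * (⟪w i, w j⟫ ^ 2 / ‖w j‖) + 2 * c * ‖w i‖ * ⟪w i, w j⟫
        + ‖w i‖ ^ 2 * ‖w j‖ := by
    by_cases hj : w j = 0
    · simp [hj]
    · have : ‖w j‖ ≠ 0 := norm_ne_zero_iff.mpr hj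
      simp only [t]
      split_ifs <;> field_simp <;> ring
  have hnonneg : 0 ≤ ∑ j, ‖w j‖ * t j ^ 2 := sum_nonneg fun j _ => by positivity
  simp only [expand, sum_add_distrib, ← mul_sum, hrow, ← hS, sum_ite_eq, mem_univ, if_true,
    real_inner_self_eq_norm_sq] at hnonneg
  linarith

namespace IsCenteredTightFrame

variable {K : ℝ} {u : ι → E}

lemma sum_sq_inner (hu : IsCenteredTightFrame K u) (x : E) :
    ∑ i, ⟪u i, x⟫ ^ 2 = K * ‖x‖ ^ 2 := by
  have h := congrArg (fun z => ⟪z, x⟫) (hu.sum_inner_smul x)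
  simpa only [sum_inner, real_inner_smul_left, real_inner_self_eq_norm_sq, ← sq] using h

lemma sum_sq_norm [FiniteDimensional ℝ E] (hu : IsCenteredTightFrame K u) :
    ∑ i, ‖u i‖ ^ 2 = K * Module.finrank ℝ E := by
  let b := stdOrthonormalBasis ℝ E
  calc ∑ i, ‖u i‖ ^ 2 = ∑ i, ∑ j, ⟪u i, b j⟫ ^ 2 :=
        sum_congr rfl fun i _ => (b.sum_sq_inner_left (u i)).symm
    _ = ∑ j, K * ‖b j‖ ^ 2 := by
        rw [sum_comm]
        exact sum_congr rfl fun j _ => hu.sum_sq_inner (b j)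
    _ = K * Module.finrank ℝ E := by simp [mul_comm]

lemma sum_sum_sq_inner_div_norm (hu : IsCenteredTightFrame K u) :
    ∑ i, ∑ j, ⟪u i, u j⟫ ^ 2 / ‖u j‖ = K * ∑ j, ‖u j‖ := by
  rw [sum_comm, mul_sum]
  refine sum_congr rfl fun j _ => ?_
  rw [← sum_div, hu.sum_sq_inner, mul_div_assoc, sq, mul_self_div_self]

lemma bound_mul_finrank_le_sq_sum_norm [FiniteDimensional ℝ E] (hu : IsCenteredTightFrame K u) :
    K * (Module.finrank ℝ E * (Module.finrank ℝ E + 1)) ≤ (∑ i, ‖u i‖) ^ 2 := by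
  set d := (Module.finrank ℝ E : ℝ)
  set S := ∑ i, ‖u i‖ with hS
  have hcubic : S * (K * (d * (d + 1))) ≤ S * S ^ 2 := by
    have h := sum_le_sum fun i (_ : i ∈ univ) =>
      two_mul_add_one_mul_sum_norm_mul_norm_sq_le hu.sum_eq_zero d i
    simp only [sum_add_distrib, ← mul_sum, hu.sum_sq_norm, hu.sum_sum_sq_inner_div_norm,
      ← hS] at h
    linarith
  obtain hpos | hzero := (show 0 ≤ S by positivity).lt_or_eq
  · exact le_of_mul_le_mul_left hcubic hpos
  · have hnorm := (sum_eq_zero_iff_of_nonneg fun i _ => norm_nonneg (u i)).mp hzero.symm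
    have htrace : K * d = 0 := by
      rw [← hu.sum_sq_norm]
      exact Finset.sum_eq_zero fun i hi => by rw [hnorm i hi, sq, zero_mul]
    rw [← mul_assoc, htrace, zero_mul]
    positivity

lemma orthogonalProjectionOnto (hu : IsCenteredTightFrame K u) (U : Submodule ℝ E)
    [U.HasOrthogonalProjection] :
    IsCenteredTightFrame K fun i => U.orthogonalProjectionOnto (u i) where
  sum_eq_zero := by rw [← map_sum, hu.sum_eq_zero, map_zero]
  sum_inner_smul x := by
    have h := congrArg U.orthogonalProjectionOnto (hu.sum_inner_smul x)
    simpa only [map_sum, map_smul, U.inner_orthogonalProjectionOnto_eq_of_mem_right,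
      U.orthogonalProjectionOnto_mem_subspace_eq_self,
      U.inner_orthogonalProjectionOnto_eq_of_mem_left] using h

end IsCenteredTightFrame

lemma inner_add_mul_norm_orthogonalProjectionOnto_le {U : Submodule ℝ E}
    [U.HasOrthogonalProjection] {a y : E} {b r : ℝ} (hr : 0 ≤ r)
    (hball : ∀ x ∈ U, ‖x‖ ≤ r → ⟪y + x, a⟫ ≤ b) :
    ⟪y, a⟫ + r * ‖U.orthogonalProjectionOnto a‖ ≤ b := by
  set p := U.orthogonalProjectionOnto a with hp
  have hpa : ⟪(p : E), a⟫ = ‖p‖ ^ 2 := by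
    rw [← U.inner_orthogonalProjectionOnto_eq_of_mem_left, ← hp, real_inner_self_eq_norm_sq]
  have hnorm : ‖((r / ‖p‖) • p : U)‖ ≤ r := by
    rw [norm_smul, Real.norm_of_nonneg (by positivity), mul_comm_div]
    exact mul_le_of_le_one_right hr (div_self_le_one _)
  have h := hball _ ((r / ‖p‖) • p).2 hnorm
  rwa [Submodule.coe_smul, inner_add_left, real_inner_smul_left, hpa, div_mul_eq_mul_div,
    mul_div_assoc, sq, mul_self_div_self] at h

theorem stmt_7_general {K : ℝ} {u : ι → E} (hu : IsCenteredTightFrame K u) {U : Submodule ℝ E}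
    [FiniteDimensional ℝ U] {h : ι → ℝ} {y : E} {r : ℝ} (hr : 0 ≤ r)
    (hball : ∀ x ∈ U, ‖x‖ ≤ r → ∀ i, ⟪y + x, u i⟫ ≤ h i) :
    r * √(K * (Module.finrank ℝ U * (Module.finrank ℝ U + 1))) ≤ ∑ i, h i := by
  let w i := U.orthogonalProjectionOnto (u i)
  have hw : √(K * (Module.finrank ℝ U * (Module.finrank ℝ U + 1))) ≤ ∑ i, ‖w i‖ :=
    Real.sqrt_le_iff.mpr ⟨by positivity,
      (hu.orthogonalProjectionOnto U).bound_mul_finrank_le_sq_sum_norm⟩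
  calc r * √(K * (Module.finrank ℝ U * (Module.finrank ℝ U + 1)))
      ≤ r * ∑ i, ‖w i‖ := mul_le_mul_of_nonneg_left hw hr
    _ = ∑ i, (⟪y, u i⟫ + r * ‖w i‖) := by
        rw [sum_add_distrib, ← inner_sum, hu.sum_eq_zero, inner_zero_right, zero_add, mul_sum]
    _ ≤ ∑ i, h i := sum_le_sum fun i _ =>
        inner_add_mul_norm_orthogonalProjectionOnto_le hr fun x hx hxr => hball x hx hxr i

end

section

variable {κ E : Type*} [NormedAddCommGroup E] [InnerProductSpace ℝ E] {v : κ → E}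

lemma finrank_span_image_of_orthonormal (hv : Orthonormal ℝ v) (s : Finset κ) :
    Module.finrank ℝ (Submodule.span ℝ (v '' s)) = #s := by
  have hs : LinearIndependent ℝ fun j : s => v j :=
    hv.linearIndependent.comp _ Subtype.val_injective
  rw [Set.image_eq_range]
  exact (finrank_span_eq_card hs).trans (Fintype.card_coe s)

lemma inner_eq_zero_of_mem_span_image_of_orthonormal (hv : Orthonormal ℝ v) {s : Set κ} {x : E}
    (hx : x ∈ Submodule.span ℝ (v '' s)) {j : κ} (hj : j ∉ s) : ⟪x, v j⟫ = 0 := by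
  have hle : Submodule.span ℝ (v '' s) ≤ (ℝ ∙ v j)ᗮ := by
    rw [Submodule.span_le, Set.image_subset_iff]
    intro l hl
    rw [Set.mem_preimage, SetLike.mem_coe, Submodule.mem_orthogonal_singleton_iff_inner_left]
    exact hv.inner_eq_zero (ne_of_mem_of_not_mem hl hj)
  exact (Submodule.mem_orthogonal_singleton_iff_inner_left).mp (hle hx)

/-- The ball of radius `r` centered at `y` in the coordinate subspace spanned by the vectors `v j`,
`j ∈ s`, of an orthonormal basis `v`, cut out by its coordinates rather than given as a span. -/
def coordinateBall (v : κ → E) (s : Finset κ) (y : E) (r : ℝ) : Set E :=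
  {x | ∑ j ∈ s, ⟪x - y, v j⟫ ^ 2 ≤ r ^ 2 ∧ ∀ j ∉ s, ⟪x - y, v j⟫ = 0}

lemma add_mem_coordinateBall (hv : Orthonormal ℝ v) {s : Finset κ} {x : E}
    (hx : x ∈ Submodule.span ℝ (v '' s)) {r : ℝ} (hxr : ‖x‖ ≤ r) (y : E) :
    y + x ∈ coordinateBall v s y r := by
  rw [coordinateBall, Set.mem_ofPred_eq, add_sub_cancel_left]
  refine ⟨?_, fun j hj => inner_eq_zero_of_mem_span_image_of_orthonormal hv hx hj⟩
  calc ∑ j ∈ s, ⟪x, v j⟫ ^ 2 ≤ ‖x‖ ^ 2 := by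
        simpa [real_inner_comm] using hv.sum_inner_products_le x (s := s)
    _ ≤ r ^ 2 := by gcongr

lemma IsCenteredTightFrame.radius_mul_sqrt_le_of_coordinateBall_subset {ι : Type*} [Fintype ι]
    {K : ℝ} {u : ι → E} (hu : IsCenteredTightFrame K u) (hv : Orthonormal ℝ v) {s : Finset κ}
    {h : ι → ℝ} {y : E} {r : ℝ} (hr : 0 ≤ r)
    (hsub : coordinateBall v s y r ⊆ {x | ∀ i, ⟪x, u i⟫ ≤ h i}) :
    r * √(K * (#s * (#s + 1))) ≤ ∑ i, h i := by
  have : FiniteDimensional ℝ (Submodule.span ℝ (v '' s)) :=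
    .span_of_finite ℝ (s.finite_toSet.image v)
  rw [← finrank_span_image_of_orthonormal hv s]
  exact stmt_7_general hu hr fun x hx hxr => hsub (add_mem_coordinateBall hv hx hxr y)

end

/-- Proposition 2 (upper bound): if a `k`-dimensional Euclidean ball of radius `r`
(centred at `y`, spanned by the first `k` vectors of the orthonormal basis `v`)
is contained in the regular solid simplex
`T = {x : ⟪x, u i⟫ ≤ 1, 1 ≤ i ≤ n+1}` of internal radius `1`,
then `r ≤ √(n(n+1)/(k(k+1)))`. -/
theorem stmt_7 {n k : ℕ} (hn : 2 ≤ n) (hk1 : 1 ≤ k) (hkn : k ≤ n - 1)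
    (u : Fin (n + 1) → EuclideanSpace ℝ (Fin n))
    (hu : ∀ i, ‖u i‖ = 1)
    (ha : ∑ i, u i = 0)
    (hb : ∀ x : EuclideanSpace ℝ (Fin n),
      ∑ i, (⟪u i, x⟫) • u i = ((n + 1 : ℝ) / n) • x)
    (hangle : ∀ i j, i ≠ j → ⟪u i, u j⟫ = -(1 / (n : ℝ)))
    (y : EuclideanSpace ℝ (Fin n)) (r : ℝ) (hr : 0 < r)
    (v : OrthonormalBasis (Fin n) ℝ (EuclideanSpace ℝ (Fin n)))
    (hET : {x : EuclideanSpace ℝ (Fin n) |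
        (∑ j ∈ Finset.univ.filter (fun j : Fin n => (j : ℕ) < k),
          ⟪x - y, v j⟫ ^ 2 ≤ r ^ 2) ∧
        ∀ j : Fin n, k ≤ (j : ℕ) → ⟪x - y, v j⟫ = 0} ⊆
      {x : EuclideanSpace ℝ (Fin n) | ∀ i, ⟪x, u i⟫ ≤ 1}) :
    r ≤ Real.sqrt ((n * (n + 1)) / (k * (k + 1))) := by
  let s := univ.filter fun j : Fin n => (j : ℕ) < k
  have hcard : #s = k := by rw [Fin.card_filter_val_lt, min_eq_right (by omega)]
  have hsub : coordinateBall v s y r ⊆ {x | ∀ i, ⟪x, u i⟫ ≤ 1} :=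
    fun x hx => hET ⟨hx.1, fun j hj => hx.2 j (by simpa [s] using hj)⟩
  have hframe : IsCenteredTightFrame ((n + 1 : ℝ) / n) u := ⟨ha, hb⟩
  have hradius : r * √((n + 1) / n * (k * (k + 1))) ≤ n + 1 := by
    simpa [hcard] using
      hframe.radius_mul_sqrt_le_of_coordinateBall_subset v.orthonormal hr.le hsub
  calc r ≤ (n + 1) / √((n + 1) / n * (k * (k + 1))) := (le_div_iff₀ (by positivity)).mpr hradius
    _ = √((n + 1) ^ 2 / ((n + 1) / n * (k * (k + 1)))) := by
        rw [Real.sqrt_div (by positivity), Real.sqrt_sq (by positivity)]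
    _ = √((n * (n + 1)) / (k * (k + 1))) := congrArg Real.sqrt (by field_simp)
end

section
/- Let T ⊂ ℝ^n be a regular solid simplex of internal radius 1, given as T = {x ∈ ℝ^n : ⟨x, u_i⟩ ≤ 1, 1 ≤ i ≤ n+1} where the u_i satisfy the regular-simplex conditions, and let 1 ≤ k ≤ n−1. Then T contains a k-dimensional Euclidean ball of radius √(n(n+1)/(k(k+1))): there exist y ∈ ℝ^n and orthonormal vectors v_1,…,v_k in ℝ^n such that every point x = y + Σ_{j=1}^k t_j v_j with Σ_{j=1}^k t_j² ≤ n(n+1)/(k(k+1)) lies in T. -/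
open Finset RealInnerProductSpace

/-!
The points `-n u_i` lie in `T`, hence so does every `∑ c_i u_i` with `c_i ≤ 0` and `∑ c_i = -n`.
The ball is the inscribed ball of the `k`-dimensional face spanned by `k + 1` of these vertices: its
centre has all coefficients equal to `-n/(k+1)`, and moving by `∑ c_i u_i` with `∑ c_i = 0` has
squared length `(1 + 1/n) ∑ c_i²`. By Cauchy–Schwarz a zero-sum family of `k + 1` reals satisfies
`c_i² ≤ (k/(k+1)) ∑ c_j²`, so a move of length at most `√(n(n+1)/(k(k+1)))` changes each coefficient
by at most `n/(k+1)` and keeps it nonpositive.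
-/

section ZeroSum

variable {ι R : Type*} [CommRing R] [LinearOrder R] [IsStrictOrderedRing R]

lemma card_mul_sq_le_of_sum_eq_zero {A : Finset ι} {a : ι → R} (ha : ∑ j ∈ A, a j = 0)
    {i : ι} (hi : i ∈ A) : #A * a i ^ 2 ≤ (#A - 1) * ∑ j ∈ A, a j ^ 2 := by
  classical
  have sum_others : ∑ j ∈ A.erase i, a j = -a i := by linarith [add_sum_erase A a hi]
  have sum_sq_others := add_sum_erase A (fun j ↦ a j ^ 2) hi
  have cauchy_schwarz := sq_sum_le_card_mul_sum_sq (s := A.erase i) (f := a)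
  rw [sum_others, cast_card_erase_of_mem hi, neg_sq] at cauchy_schwarz
  rw [← sum_sq_others]
  linarith

lemma card_mul_le_of_sum_eq_zero {A : Finset ι} {a : ι → R} {r : R} (hr : 0 ≤ r)
    (ha : ∑ j ∈ A, a j = 0) (hsq : #A * (#A - 1) * ∑ j ∈ A, a j ^ 2 ≤ r ^ 2)
    {i : ι} (hi : i ∈ A) : #A * a i ≤ r := by
  refine (abs_le_of_sq_le_sq' ?_ hr).2
  calc (#A * a i) ^ 2 = #A * (#A * a i ^ 2) := by ring
    _ ≤ #A * ((#A - 1) * ∑ j ∈ A, a j ^ 2) :=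
      mul_le_mul_of_nonneg_left (card_mul_sq_le_of_sum_eq_zero ha hi) (Nat.cast_nonneg _)
    _ ≤ r ^ 2 := by rwa [← mul_assoc]

end ZeroSum

lemma exists_sum_smul_of_mem_vectorSpan_image {ι 𝕜 V : Type*} [Ring 𝕜] [AddCommGroup V]
    [Module 𝕜 V] {p : ι → V} {A : Finset ι} {x : V} (hx : x ∈ vectorSpan 𝕜 (p '' A)) :
    ∃ c : ι → 𝕜, ∑ i ∈ A, c i = 0 ∧ x = ∑ i ∈ A, c i • p i := by
  classical
  induction hx using Submodule.span_induction with
  | mem x hx =>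
    obtain ⟨_, ⟨i, hi, rfl⟩, _, ⟨j, hj, rfl⟩, rfl⟩ := hx
    rw [mem_coe] at hi hj
    exact ⟨Pi.single i 1 - Pi.single j 1, by simp [hi, hj], by
      simp [sub_smul, Pi.single_apply, hi, hj]⟩
  | zero => exact ⟨0, by simp⟩
  | add x y _ _ hx hy =>
    obtain ⟨c, hc, rfl⟩ := hx
    obtain ⟨d, hd, rfl⟩ := hy
    exact ⟨c + d, by simp [sum_add_distrib, hc, hd], by simp [add_smul, sum_add_distrib]⟩
  | smul a x _ hx =>
    obtain ⟨c, hc, rfl⟩ := hx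
    exact ⟨a • c, by simp [← mul_sum, hc], by simp [smul_sum, mul_smul]⟩

section Orthonormal

variable {𝕜 E : Type*} [RCLike 𝕜] [NormedAddCommGroup E] [InnerProductSpace 𝕜 E]

lemma norm_sq_sum_smul_of_orthonormal {ι : Type*} [Fintype ι] {v : ι → E} (hv : Orthonormal 𝕜 v)
    (t : ι → 𝕜) : ‖∑ j, t j • v j‖ ^ 2 = ∑ j, ‖t j‖ ^ 2 := by
  rw [← RCLike.ofReal_inj (K := 𝕜), RCLike.ofReal_pow, ← inner_self_eq_norm_sq_to_K, hv.inner_sum]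
  simp only [RCLike.conj_mul, RCLike.ofReal_sum, RCLike.ofReal_pow]

lemma exists_orthonormal_mem_of_finrank_eq {k : ℕ} (D : Submodule 𝕜 E) [FiniteDimensional 𝕜 D]
    (hD : Module.finrank 𝕜 D = k) : ∃ v : Fin k → E, Orthonormal 𝕜 v ∧ ∀ j, v j ∈ D := by
  let b := (stdOrthonormalBasis 𝕜 D).reindex (finCongr hD)
  exact ⟨fun j ↦ b j, b.orthonormal.comp_linearIsometry D.subtypeₗᵢ, fun j ↦ (b j).2⟩

end Orthonormal

section Equiangular

variable {E ι : Type*} [NormedAddCommGroup E] [InnerProductSpace ℝ E]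

/-- A family of unit vectors with pairwise inner products `-1/r`. For `n + 1` vectors in dimension
`r = n` these are the outer unit normals of a regular simplex; the parameter `r` is not tied to
the number of vectors or to the dimension, so that subfamilies are covered too. -/
structure IsEquiangular (r : ℝ) (u : ι → E) : Prop where
  norm_eq_one : ∀ i, ‖u i‖ = 1
  inner_eq : ∀ i j, i ≠ j → ⟪u i, u j⟫ = -(1 / r)

/-- The centroid of the face with vertices `-r u_i`, `i ∈ A`, of `{x : ⟪x, u_i⟫ ≤ 1}`. -/
noncomputable def faceCentroid (r : ℝ) (u : ι → E) (A : Finset ι) : E :=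
  ∑ i ∈ A, (-(r / #A)) • u i

namespace IsEquiangular

variable {r : ℝ} {u : ι → E} {A : Finset ι} {c : ι → ℝ} {l : ι}

lemma inner_sum_smul_of_mem (hu : IsEquiangular r u) (c : ι → ℝ) (hl : l ∈ A) :
    ⟪∑ i ∈ A, c i • u i, u l⟫ = (1 + 1 / r) * c l - 1 / r * ∑ i ∈ A, c i := by
  classical
  have others : ∑ i ∈ A.erase l, c i * ⟪u i, u l⟫ = -(1 / r) * ∑ i ∈ A.erase l, c i := by
    rw [mul_sum]
    exact sum_congr rfl fun i hi ↦ by rw [hu.inner_eq i l (ne_of_mem_erase hi), mul_comm]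
  simp only [sum_inner, real_inner_smul_left]
  rw [← add_sum_erase A _ hl, others, real_inner_self_eq_norm_sq, hu.norm_eq_one,
    ← add_sum_erase A c hl]
  ring

lemma inner_sum_smul_of_notMem (hu : IsEquiangular r u) (c : ι → ℝ) (hl : l ∉ A) :
    ⟪∑ i ∈ A, c i • u i, u l⟫ = -(1 / r) * ∑ i ∈ A, c i := by
  simp only [sum_inner, real_inner_smul_left, mul_sum]
  exact sum_congr rfl fun i hi ↦ by
    rw [hu.inner_eq i l (ne_of_mem_of_not_mem hi hl), mul_comm]

lemma inner_sum_smul_le_one (hu : IsEquiangular r u) (hr : 0 < r)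
    (hsum : ∑ i ∈ A, c i = -r) (hc : ∀ i ∈ A, c i ≤ 0) (l : ι) :
    ⟪∑ i ∈ A, c i • u i, u l⟫ ≤ 1 := by
  have neg_sum_div : -(1 / r) * -r = 1 := by field_simp
  by_cases hl : l ∈ A
  · have := mul_nonpos_of_nonneg_of_nonpos (by positivity : 0 ≤ 1 + 1 / r) (hc l hl)
    rw [hu.inner_sum_smul_of_mem c hl, hsum]
    linarith
  · rw [hu.inner_sum_smul_of_notMem c hl, hsum, neg_sum_div]

lemma norm_sq_sum_smul (hu : IsEquiangular r u) (hc : ∑ i ∈ A, c i = 0) :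
    ‖∑ i ∈ A, c i • u i‖ ^ 2 = (1 + 1 / r) * ∑ i ∈ A, c i ^ 2 := by
  rw [← real_inner_self_eq_norm_sq, inner_sum, mul_sum]
  refine sum_congr rfl fun l hl ↦ ?_
  rw [real_inner_smul_right, hu.inner_sum_smul_of_mem c hl, hc]
  ring

lemma affineIndependent (hu : IsEquiangular r u) (hr : 0 < r) : AffineIndependent ℝ u := by
  refine affineIndependent_iff.2 fun A c hc hx i hi ↦ ?_
  have hsq : (1 + 1 / r) * ∑ i ∈ A, c i ^ 2 = 0 := by
    rw [← hu.norm_sq_sum_smul hc, hx, norm_zero, sq, zero_mul]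
  have sum_sq_eq_zero := (mul_eq_zero.1 hsq).resolve_left (by positivity)
  exact pow_eq_zero_iff two_ne_zero |>.1 <|
    (sum_eq_zero_iff_of_nonneg fun j _ ↦ sq_nonneg (c j)).1 sum_sq_eq_zero i hi

lemma inner_faceCentroid_add_le_one (hu : IsEquiangular r u) (hr : 0 < r) (hA : A.Nonempty)
    {x : E} (hx : x ∈ vectorSpan ℝ (u '' A)) (hnorm : #A * (#A - 1) * ‖x‖ ^ 2 ≤ r * (r + 1))
    (l : ι) : ⟪faceCentroid r u A + x, u l⟫ ≤ 1 := by
  obtain ⟨c, hc, rfl⟩ := exists_sum_smul_of_mem_vectorSpan_image hx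
  have hA0 : (0 : ℝ) < #A := by exact_mod_cast hA.card_pos
  have hsq : #A * (#A - 1) * ∑ i ∈ A, c i ^ 2 ≤ r ^ 2 := by
    rw [hu.norm_sq_sum_smul hc] at hnorm
    refine le_of_mul_le_mul_left ?_ (by positivity : 0 < 1 + 1 / r)
    calc (1 + 1 / r) * (#A * (#A - 1) * ∑ i ∈ A, c i ^ 2)
        = #A * (#A - 1) * ((1 + 1 / r) * ∑ i ∈ A, c i ^ 2) := by ring
      _ ≤ r * (r + 1) := hnorm
      _ = (1 + 1 / r) * r ^ 2 := by field_simp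
  rw [faceCentroid, ← sum_add_distrib]
  simp only [← add_smul]
  refine hu.inner_sum_smul_le_one hr ?_ (fun i hi ↦ ?_) l
  · rw [sum_add_distrib, hc, sum_const, nsmul_eq_mul]
    field_simp
    ring
  · have := (le_div_iff₀' hA0).2 (card_mul_le_of_sum_eq_zero hr.le hc hsq hi)
    linarith

end IsEquiangular

-- For `k = 0` the quotient has the junk value `0`, but the ball is then the single point `y`
-- whatever its radius.
theorem stmt_8_general [Fintype ι] {r : ℝ} (hr : 0 < r) {u : ι → E} (hu : IsEquiangular r u)
    {k : ℕ} (hk : k < Fintype.card ι) :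
    ∃ (y : E) (v : Fin k → E), Orthonormal ℝ v ∧
      ∀ t : Fin k → ℝ, ∑ j, t j ^ 2 ≤ (r * (r + 1)) / (k * (k + 1)) →
        ∀ i, ⟪y + ∑ j, t j • v j, u i⟫ ≤ 1 := by
  classical
  obtain ⟨A, -, hA⟩ := exists_subset_card_eq (s := (univ : Finset ι)) hk
  have hdim := (hu.affineIndependent hr).finrank_vectorSpan_image_finset hA
  rw [coe_image] at hdim
  obtain ⟨v, hv, hvA⟩ := exists_orthonormal_mem_of_finrank_eq _ hdim
  refine ⟨faceCentroid r u A, v, hv, fun t ht ↦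
    hu.inner_faceCentroid_add_le_one hr (card_pos.1 (by omega)) ?_ ?_⟩
  · exact Submodule.sum_mem _ fun j _ ↦ Submodule.smul_mem _ _ (hvA j)
  · rw [norm_sq_sum_smul_of_orthonormal hv, hA]
    simp only [Real.norm_eq_abs, sq_abs]
    have := mul_le_of_le_div₀ (by positivity) (by positivity) ht
    push_cast
    linarith

end Equiangular

/-- Proposition 2 (attainment): the regular solid simplex
`T = {x : ⟪x, u i⟫ ≤ 1, 1 ≤ i ≤ n+1}` of internal radius `1` contains a
`k`-dimensional Euclidean ball of radius `√(n(n+1)/(k(k+1)))`. -/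
theorem stmt_8 {n k : ℕ} (hn : 2 ≤ n) (hk1 : 1 ≤ k) (hkn : k ≤ n - 1)
    (u : Fin (n + 1) → EuclideanSpace ℝ (Fin n))
    (hu : ∀ i, ‖u i‖ = 1)
    (ha : ∑ i, u i = 0)
    (hb : ∀ x : EuclideanSpace ℝ (Fin n),
      ∑ i, (⟪u i, x⟫) • u i = ((n + 1 : ℝ) / n) • x)
    (hangle : ∀ i j, i ≠ j → ⟪u i, u j⟫ = -(1 / (n : ℝ))) :
    ∃ (y : EuclideanSpace ℝ (Fin n)) (v : Fin k → EuclideanSpace ℝ (Fin n)),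
      Orthonormal ℝ v ∧
      ∀ t : Fin k → ℝ, ∑ j, t j ^ 2 ≤ (n * (n + 1)) / (k * (k + 1)) →
        ∀ i, ⟪y + ∑ j, t j • v j, u i⟫ ≤ 1 :=
  stmt_8_general (by exact_mod_cast (by omega : 0 < n)) ⟨hu, hangle⟩
    (by rw [Fintype.card_fin]; omega)
end

section
/- Let x_1,…,x_m be vectors in a Euclidean space with Σ_{i=1}^m x_i = 0, and let u_1,…,u_m be unit vectors in the same space. Then (Σ_{i=1}^m ⟨x_i, u_i⟩)² ≤ Σ_{i=1}^m Σ_{j=1}^m ‖x_i‖ · ‖x_j‖ · (1 − ⟨u_i, u_j⟩). -/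
/-!
As `∑ x i = 0`, the `u i` may be recentred at any point `c` without changing `∑ ⟪x i, u i⟫`.
Cauchy–Schwarz with the weights `‖x i‖` then bounds the square of this sum by
`(∑ ‖x i‖) * ∑ ‖x i‖ * ‖u i - c‖ ^ 2`. When `c` is the weighted mean of the `u i`, this equals
half of `∑ ∑ ‖x i‖ * ‖x j‖ * ‖u i - u j‖ ^ 2`, and `‖u i - u j‖ ^ 2 / 2` is `1 - ⟪u i, u j⟫` for
unit vectors.
-/

open Finset RealInnerProductSpace

section CenterMass

variable {R V ι : Type*} [Field R] [LinearOrder R] [IsStrictOrderedRing R] [AddCommGroup V]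
  [Module R V] {s : Finset ι} {w : ι → R}

theorem sum_smul_sub_centerMass (hw : ∀ i ∈ s, 0 ≤ w i) (z : ι → V) :
    ∑ i ∈ s, w i • (z i - s.centerMass w z) = 0 := by
  by_cases hsum : ∑ i ∈ s, w i = 0
  · have hzero : ∀ i ∈ s, w i = 0 := (sum_eq_zero_iff_of_nonneg hw).1 hsum
    exact sum_eq_zero fun i hi ↦ by rw [hzero i hi, zero_smul]
  · simp only [smul_sub, sum_sub_distrib, ← sum_smul]
    rw [centerMass, smul_inv_smul₀ hsum, sub_self]

end CenterMass

section InnerProductSpace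

variable {E ι : Type*} [SeminormedAddCommGroup E] [InnerProductSpace ℝ E] {s : Finset ι}
  {x u : ι → E}

theorem norm_sum_smul_sq_eq_sum_sum_mul_inner (s : Finset ι) (w : ι → ℝ) (v : ι → E) :
    ‖∑ i ∈ s, w i • v i‖ ^ 2 = ∑ i ∈ s, ∑ j ∈ s, w i * w j * ⟪v i, v j⟫ := by
  rw [← real_inner_self_eq_norm_sq, sum_inner]
  simp only [inner_sum, real_inner_smul_left, real_inner_smul_right, mul_assoc,
    mul_left_comm]

theorem sum_sum_mul_norm_sub_sq (s : Finset ι) (w : ι → ℝ) (v : ι → E) :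
    ∑ i ∈ s, ∑ j ∈ s, w i * w j * ‖v i - v j‖ ^ 2 =
      2 * ((∑ i ∈ s, w i) * ∑ i ∈ s, w i * ‖v i‖ ^ 2 - ‖∑ i ∈ s, w i • v i‖ ^ 2) := by
  have expand (i j : ι) : w i * w j * ‖v i - v j‖ ^ 2 =
      w i * ‖v i‖ ^ 2 * w j + w i * (w j * ‖v j‖ ^ 2) - 2 * (w i * w j * ⟪v i, v j⟫) := by
    rw [norm_sub_sq_real]
    ring
  simp only [expand, sum_sub_distrib, sum_add_distrib, ← mul_sum, ← sum_mul,
    ← norm_sum_smul_sq_eq_sum_sum_mul_inner]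
  ring

theorem sum_sum_mul_norm_sub_sq_eq_centerMass {w : ι → ℝ}
    (hw : ∀ i ∈ s, 0 ≤ w i) (u : ι → E) :
    ∑ i ∈ s, ∑ j ∈ s, w i * w j * ‖u i - u j‖ ^ 2 =
      2 * ((∑ i ∈ s, w i) * ∑ i ∈ s, w i * ‖u i - s.centerMass w u‖ ^ 2) := by
  simpa only [sub_sub_sub_cancel_right, sum_smul_sub_centerMass hw, norm_zero, ne_eq,
    OfNat.ofNat_ne_zero, not_false_eq_true, zero_pow, sub_zero] using
    sum_sum_mul_norm_sub_sq s w fun i ↦ u i - s.centerMass w u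

theorem sum_inner_sq_le_sum_norm_mul_sum_norm_mul_norm_sq (s : Finset ι) (x v : ι → E) :
    (∑ i ∈ s, ⟪x i, v i⟫) ^ 2 ≤ (∑ i ∈ s, ‖x i‖) * ∑ i ∈ s, ‖x i‖ * ‖v i‖ ^ 2 := by
  refine sum_sq_le_sum_mul_sum_of_sq_le_mul s (fun i _ ↦ norm_nonneg _)
    (fun i _ ↦ by positivity) fun i _ ↦ ?_
  calc ⟪x i, v i⟫ ^ 2 = |⟪x i, v i⟫| ^ 2 := (sq_abs _).symm
    _ ≤ (‖x i‖ * ‖v i‖) ^ 2 := by gcongr; exact abs_real_inner_le_norm _ _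
    _ = ‖x i‖ * (‖x i‖ * ‖v i‖ ^ 2) := by ring

theorem sum_inner_sub_const_of_sum_eq_zero (hx : ∑ i ∈ s, x i = 0) (u : ι → E) (c : E) :
    ∑ i ∈ s, ⟪x i, u i - c⟫ = ∑ i ∈ s, ⟪x i, u i⟫ := by
  simp only [inner_sub_right, sum_sub_distrib, ← sum_inner, hx, inner_zero_left, sub_zero]

theorem sum_inner_sq_le_sum_sum_norm_mul_norm_sub_sq (hx : ∑ i ∈ s, x i = 0) (u : ι → E) :
    (∑ i ∈ s, ⟪x i, u i⟫) ^ 2 ≤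
      ∑ i ∈ s, ∑ j ∈ s, ‖x i‖ * ‖x j‖ * (‖u i - u j‖ ^ 2 / 2) := by
  set c := s.centerMass (fun i ↦ ‖x i‖) u
  calc (∑ i ∈ s, ⟪x i, u i⟫) ^ 2
      = (∑ i ∈ s, ⟪x i, u i - c⟫) ^ 2 := by rw [sum_inner_sub_const_of_sum_eq_zero hx]
    _ ≤ (∑ i ∈ s, ‖x i‖) * ∑ i ∈ s, ‖x i‖ * ‖u i - c‖ ^ 2 :=
      sum_inner_sq_le_sum_norm_mul_sum_norm_mul_norm_sq s x _
    _ = (∑ i ∈ s, ∑ j ∈ s, ‖x i‖ * ‖x j‖ * ‖u i - u j‖ ^ 2) / 2 := by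
      rw [sum_sum_mul_norm_sub_sq_eq_centerMass fun i _ ↦ norm_nonneg (x i),
        mul_div_cancel_left₀ _ two_ne_zero]
    _ = ∑ i ∈ s, ∑ j ∈ s, ‖x i‖ * ‖x j‖ * (‖u i - u j‖ ^ 2 / 2) := by
      simp only [sum_div, mul_div_assoc]

theorem norm_sub_sq_div_two_le_one_sub_inner {a b : E} (ha : ‖a‖ ≤ 1) (hb : ‖b‖ ≤ 1) :
    ‖a - b‖ ^ 2 / 2 ≤ 1 - ⟪a, b⟫ := by
  have ha_sq : ‖a‖ ^ 2 ≤ 1 := pow_le_one₀ (norm_nonneg a) ha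
  have hb_sq : ‖b‖ ^ 2 ≤ 1 := pow_le_one₀ (norm_nonneg b) hb
  linarith [norm_sub_sq_real a b]

theorem stmt_10_general (hx : ∑ i ∈ s, x i = 0) (hu : ∀ i ∈ s, ‖u i‖ ≤ 1) :
    (∑ i ∈ s, ⟪x i, u i⟫) ^ 2 ≤
      ∑ i ∈ s, ∑ j ∈ s, ‖x i‖ * ‖x j‖ * (1 - ⟪u i, u j⟫) := by
  refine (sum_inner_sq_le_sum_sum_norm_mul_norm_sub_sq hx u).trans ?_
  gcongr with i hi j hj
  exact norm_sub_sq_div_two_le_one_sub_inner (hu i hi) (hu j hj)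

end InnerProductSpace

/-- Lemma 5: if `∑ i, x i = 0` and the `u i` are unit vectors, then
`(∑ i, ⟪x i, u i⟫)² ≤ ∑ i j, ‖x i‖ ‖x j‖ (1 - ⟪u i, u j⟫)`. -/
theorem stmt_10 {E : Type*} [NormedAddCommGroup E] [InnerProductSpace ℝ E]
    [FiniteDimensional ℝ E] {m : ℕ} (hm : 1 ≤ m)
    (x u : Fin m → E) (hx : ∑ i, x i = 0) (hu : ∀ i, ‖u i‖ = 1) :
    (∑ i, ⟪x i, u i⟫) ^ 2 ≤
      ∑ i, ∑ j, ‖x i‖ * ‖x j‖ * (1 - ⟪u i, u j⟫) :=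
  stmt_10_general hx fun i _ ↦ (hu i).le
end

section
/- Suppose the unit vectors u_1,…,u_m and positive weights c_1,…,c_m satisfy John's conditions. Let 1 ≤ k ≤ n, let (v_j)_{j=1}^n be an orthonormal basis of ℝ^n, let α_1,…,α_k be positive reals, let y ∈ ℝ^n, and assume that for every i: ⟨u_i, y⟩ + (Σ_{j=1}^k α_j² ⟨u_i, v_j⟩²)^{1/2} ≤ 1. Then Σ_{j=1}^k α_j² ≤ n + ‖y‖². -/
open Finset RealInnerProductSpace

/-!
Squaring the hypothesis gives `∑ j, ⟪u i, w j⟫² ≤ (1 - ⟪u i, y⟫)²` with `w j = α j • v j`. Average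
over `i` with the weights `c i`. Since `∑ i, c i • u i ⊗ u i` is the identity, the left side becomes
`∑ j, ‖w j‖² = ∑ j, α j²`. On the right the constant term is the trace `∑ i, c i = n`, the linear
term vanishes because `∑ i, c i • u i = 0`, and the quadratic term is `‖y‖²`.
-/

section ResolutionOfIdentity

variable {ι κ E : Type*} [Fintype ι] [Fintype κ] [NormedAddCommGroup E] [InnerProductSpace ℝ E]
  {c : ι → ℝ} {u : ι → E}

/-- A weighted resolution of the identity `∑ i, c i • u i ⊗ u i = 1`, as in John's theorem. The
operator identity is stated pointwise; the weights may have any sign and the vectors any length. -/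
def IsResolutionOfIdentity (c : ι → ℝ) (u : ι → E) : Prop :=
  ∀ x : E, ∑ i, (c i * ⟪u i, x⟫) • u i = x

namespace IsResolutionOfIdentity

lemma sum_mul_inner_sq (h : IsResolutionOfIdentity c u) (x : E) :
    ∑ i, c i * ⟪u i, x⟫ ^ 2 = ‖x‖ ^ 2 :=
  calc ∑ i, c i * ⟪u i, x⟫ ^ 2
      = ⟪∑ i, (c i * ⟪u i, x⟫) • u i, x⟫ := by
        simp only [sum_inner, real_inner_smul_left, sq, mul_assoc]
    _ = ‖x‖ ^ 2 := by rw [h x, real_inner_self_eq_norm_sq]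

lemma sum_mul_sum_inner_sq (h : IsResolutionOfIdentity c u) (w : κ → E) :
    ∑ i, c i * ∑ j, ⟪u i, w j⟫ ^ 2 = ∑ j, ‖w j‖ ^ 2 := by
  simp_rw [← h.sum_mul_inner_sq, mul_sum]
  exact sum_comm

lemma span_range_eq_top (h : IsResolutionOfIdentity c u) :
    Submodule.span ℝ (Set.range u) = ⊤ := by
  refine Submodule.eq_top_iff'.mpr fun x => ?_
  rw [← h x]
  exact Submodule.sum_mem _ fun i _ =>
    Submodule.smul_mem _ _ (Submodule.subset_span (Set.mem_range_self i))

lemma finiteDimensional (h : IsResolutionOfIdentity c u) : FiniteDimensional ℝ E :=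
  Module.finite_def.mpr
    (Submodule.fg_def.mpr ⟨Set.range u, Set.finite_range u, h.span_range_eq_top⟩)

lemma sum_mul_norm_sq (h : IsResolutionOfIdentity c u) :
    ∑ i, c i * ‖u i‖ ^ 2 = Module.finrank ℝ E := by
  have := h.finiteDimensional
  let e := stdOrthonormalBasis ℝ E
  calc ∑ i, c i * ‖u i‖ ^ 2
      = ∑ i, c i * ∑ j, ⟪u i, e j⟫ ^ 2 := by simp only [e.sum_sq_inner_left]
    _ = ∑ j, ‖e j‖ ^ 2 := h.sum_mul_sum_inner_sq e
    _ = Module.finrank ℝ E := by simp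

lemma sum_mul_sub_inner_sq (h : IsResolutionOfIdentity c u) (hcu : ∑ i, c i • u i = 0)
    (t : ℝ) (y : E) :
    ∑ i, c i * (t - ⟪u i, y⟫) ^ 2 = t ^ 2 * ∑ i, c i + ‖y‖ ^ 2 := by
  have hlinear : ∑ i, c i * ⟪u i, y⟫ = 0 := by
    simp_rw [← real_inner_smul_left]
    rw [← sum_inner, hcu, inner_zero_left]
  calc ∑ i, c i * (t - ⟪u i, y⟫) ^ 2
      = t ^ 2 * ∑ i, c i - 2 * t * ∑ i, c i * ⟪u i, y⟫ + ∑ i, c i * ⟪u i, y⟫ ^ 2 := by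
        simp only [mul_sum, ← sum_sub_distrib, ← sum_add_distrib]
        exact sum_congr rfl fun i _ => by ring
    _ = t ^ 2 * ∑ i, c i + ‖y‖ ^ 2 := by
        rw [hlinear, h.sum_mul_inner_sq, mul_zero, sub_zero]

end IsResolutionOfIdentity

theorem stmt_13_general (hu : ∀ i, ‖u i‖ = 1) (hc : ∀ i, 0 ≤ c i)
    (hcu : ∑ i, c i • u i = 0) (h : IsResolutionOfIdentity c u) (y : E) (w : κ → E)
    (htouch : ∀ i, ⟪u i, y⟫ + √(∑ j, ⟪u i, w j⟫ ^ 2) ≤ 1) :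
    ∑ j, ‖w j‖ ^ 2 ≤ Module.finrank ℝ E + ‖y‖ ^ 2 := by
  have hsq (i : ι) : ∑ j, ⟪u i, w j⟫ ^ 2 ≤ (1 - ⟪u i, y⟫) ^ 2 :=
    (Real.sqrt_le_iff.mp (le_sub_iff_add_le'.mpr (htouch i))).2
  have htrace : ∑ i, c i = Module.finrank ℝ E := by simpa [hu] using h.sum_mul_norm_sq
  calc ∑ j, ‖w j‖ ^ 2
      = ∑ i, c i * ∑ j, ⟪u i, w j⟫ ^ 2 := (h.sum_mul_sum_inner_sq w).symm
    _ ≤ ∑ i, c i * (1 - ⟪u i, y⟫) ^ 2 :=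
        sum_le_sum fun i _ => mul_le_mul_of_nonneg_left (hsq i) (hc i)
    _ = Module.finrank ℝ E + ‖y‖ ^ 2 := by
        rw [h.sum_mul_sub_inner_sq hcu, htrace, one_pow, one_mul]

end ResolutionOfIdentity

/-- Inequality (11) of Proposition 4: under John's conditions, if
`⟪u i, y⟫ + √(∑ j, α j² ⟪u i, v j⟫²) ≤ 1` for every `i`, then
`∑ j, α j² ≤ n + ‖y‖²`. -/
theorem stmt_13 {n m k : ℕ} (hn : 1 ≤ n) (hm : 1 ≤ m) (hk1 : 1 ≤ k) (hkn : k ≤ n)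
    (u : Fin m → EuclideanSpace ℝ (Fin n)) (c : Fin m → ℝ)
    (hu : ∀ i, ‖u i‖ = 1) (hc : ∀ i, 0 < c i)
    (ha : ∑ i, c i • u i = 0)
    (hb : ∀ x : EuclideanSpace ℝ (Fin n), ∑ i, (c i * ⟪u i, x⟫) • u i = x)
    (y : EuclideanSpace ℝ (Fin n))
    (v : OrthonormalBasis (Fin n) ℝ (EuclideanSpace ℝ (Fin n)))
    (α : Fin k → ℝ) (hα : ∀ j, 0 < α j)
    (htouch : ∀ i, ⟪u i, y⟫ +
      Real.sqrt (∑ j : Fin k, (α j) ^ 2 * ⟪u i, v (Fin.castLE hkn j)⟫ ^ 2) ≤ 1) :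
    ∑ j, (α j) ^ 2 ≤ n + ‖y‖ ^ 2 := by
  simpa [norm_smul] using stmt_13_general hu (fun i => (hc i).le) ha hb y
    (fun j => α j • v (Fin.castLE hkn j))
    (by simpa only [real_inner_smul_right, mul_pow] using htouch)
end

section
/- Suppose the unit vectors u_1,…,u_m and positive weights c_1,…,c_m satisfy John's conditions. Let 1 ≤ k ≤ n, let (v_j)_{j=1}^n be an orthonormal basis of ℝ^n, let α_1,…,α_k be positive reals, let y ∈ ℝ^n, and assume that for every i: ⟨u_i, y⟩ + (Σ_{j=1}^k α_j² ⟨u_i, v_j⟩²)^{1/2} ≤ 1. Then (Σ_{j=1}^k α_j)² ≤ n² − ‖y‖². -/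
open Finset RealInnerProductSpace

/-!
Let `A` be the operator with eigenvalues `|α j|` along `v j`, and put `s = tr A` and
`ρ = √(s ^ 2 + ‖y‖ ^ 2)`. The Lorentz boost with velocity `y / ρ`, scaled by `s`, sends the
light-like vector `(1, u)`, where `‖u‖ = 1`, to a light-like vector `(ρ + ⟪u, y⟫, z u)`, so
`‖z u‖ = ρ + ⟪u, y⟫`. As `‖A (u i)‖ ≤ 1 - ⟪u i, y⟫`, the Cauchy-Schwarz inequality gives
`⟪A (u i), z (u i)⟫ ≤ (1 - ⟪u i, y⟫) * (ρ + ⟪u i, y⟫)`. Averaged with the weights `c i`, the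
right-hand side becomes `n * ρ - ‖y‖ ^ 2` and the left-hand side becomes `s * tr A = s ^ 2` plus a
nonnegative multiple of `⟪A y, y⟫`. Hence `ρ ^ 2 ≤ n * ρ`, that is, `ρ ≤ n`.
-/

variable {E F ι κ : Type*} [NormedAddCommGroup E] [InnerProductSpace ℝ E]
  [NormedAddCommGroup F] [InnerProductSpace ℝ F] [Fintype ι] [Fintype κ]

/-- The spatial part of the image of `(1, u)` under `s` times the Lorentz boost of `ℝ × E` with
velocity `y / √(s ^ 2 + ‖y‖ ^ 2)`. The usual coefficient `(√(s ^ 2 + ‖y‖ ^ 2) - s) / ‖y‖ ^ 2` is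
rationalized, so that `y = 0` is not singular; the denominator below vanishes only for
`y = 0` and `s ≤ 0`, where the coefficient of `y` does not matter. -/
noncomputable def scaledBoost (s : ℝ) (y u : E) : E :=
  s • u + (⟪u, y⟫ / (√(s ^ 2 + ‖y‖ ^ 2) + s) + 1) • y

lemma norm_scaledBoost (s : ℝ) (y : E) {u : E} (hu : ‖u‖ = 1) :
    ‖scaledBoost s y u‖ = √(s ^ 2 + ‖y‖ ^ 2) + ⟪u, y⟫ := by
  rcases eq_or_ne y 0 with rfl | hy
  · simp [scaledBoost, norm_smul, hu, Real.sqrt_sq_eq_abs]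
  set ρ := √(s ^ 2 + ‖y‖ ^ 2) with hρ
  have norm_le : ‖y‖ ≤ ρ := Real.le_sqrt_of_sq_le (le_add_of_nonneg_left (sq_nonneg s))
  have inner_ge : -‖y‖ ≤ ⟪u, y⟫ := by
    simpa [hu] using (abs_le.mp (abs_real_inner_le_norm u y)).1
  have sq_rho : ρ ^ 2 = s ^ 2 + ‖y‖ ^ 2 := Real.sq_sqrt (by positivity)
  have sq_norm : ‖y‖ ^ 2 = (ρ + s) * (ρ - s) := by linear_combination -sq_rho
  have rho_add_ne_zero : ρ + s ≠ 0 :=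
    left_ne_zero_of_mul (sq_norm ▸ pow_ne_zero 2 (norm_ne_zero_iff.mpr hy))
  refine (sq_eq_sq₀ (norm_nonneg _) (by linarith)).mp ?_
  rw [scaledBoost, ← hρ, norm_add_sq_real, norm_smul, norm_smul, hu, real_inner_smul_left,
    real_inner_smul_right, mul_pow, mul_pow, Real.norm_eq_abs, Real.norm_eq_abs, sq_abs, sq_abs,
    sq_norm]
  field_simp
  ring

/-- John's conditions: the weights `c` and the unit vectors `u` form a centred decomposition
`∑ i, c i • u i ⊗ u i` of the identity. Zero weights are allowed. -/
structure IsJohnDecomposition (c : ι → ℝ) (u : ι → E) : Prop where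
  norm_eq_one : ∀ i, ‖u i‖ = 1
  weight_nonneg : ∀ i, 0 ≤ c i
  sum_smul_eq_zero : ∑ i, c i • u i = 0
  sum_inner_smul : ∀ x, ∑ i, (c i * ⟪u i, x⟫) • u i = x

namespace IsJohnDecomposition

variable {c : ι → ℝ} {u : ι → E}

lemma sum_mul_inner_map (h : IsJohnDecomposition c u) (A : E →ₗ[ℝ] F) (z : F) :
    ∑ i, c i * ⟪A (u i), z⟫ = 0 := by
  simpa [sum_inner, real_inner_smul_left] using
    congrArg (fun x => ⟪A x, z⟫) h.sum_smul_eq_zero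

lemma sum_mul_inner_mul_inner_map (h : IsJohnDecomposition c u) (A : E →ₗ[ℝ] F) (x : E) (z : F) :
    ∑ i, c i * (⟪u i, x⟫ * ⟪A (u i), z⟫) = ⟪A x, z⟫ := by
  simpa [sum_inner, real_inner_smul_left, mul_assoc] using
    congrArg (fun x => ⟪A x, z⟫) (h.sum_inner_smul x)

variable [FiniteDimensional ℝ E]

lemma sum_mul_inner_map_self (h : IsJohnDecomposition c u) (A : E →ₗ[ℝ] E) :
    ∑ i, c i * ⟪A (u i), u i⟫ = A.trace ℝ E := by
  have hA : A = ∑ i, c i • (InnerProductSpace.rankOne ℝ (A (u i)) (u i)).toLinearMap := by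
    ext x
    simpa [smul_smul] using congrArg A (h.sum_inner_smul x).symm
  conv_rhs => rw [hA]
  simp [InnerProductSpace.trace_rankOne, real_inner_comm]

lemma sum_weight (h : IsJohnDecomposition c u) : ∑ i, c i = Module.finrank ℝ E := by
  simpa [h.norm_eq_one] using h.sum_mul_inner_map_self LinearMap.id

lemma sum_mul_inner_map_scaledBoost (h : IsJohnDecomposition c u) (A : E →ₗ[ℝ] E) (s : ℝ) (y : E) :
    ∑ i, c i * ⟪A (u i), scaledBoost s y (u i)⟫ =
      s * A.trace ℝ E + ⟪A y, y⟫ / (√(s ^ 2 + ‖y‖ ^ 2) + s) := by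
  set δ := √(s ^ 2 + ‖y‖ ^ 2) + s with hδ
  have expand (i : ι) : c i * ⟪A (u i), scaledBoost s y (u i)⟫ =
      s * (c i * ⟪A (u i), u i⟫) + (c i * (⟪u i, y⟫ * ⟪A (u i), y⟫)) / δ +
        c i * ⟪A (u i), y⟫ := by
    rw [scaledBoost, ← hδ, inner_add_right, real_inner_smul_right, real_inner_smul_right]
    ring
  simp_rw [expand, sum_add_distrib, ← mul_sum, ← sum_div, h.sum_mul_inner_map_self,
    h.sum_mul_inner_mul_inner_map, h.sum_mul_inner_map, add_zero]

lemma sum_mul_one_sub_inner_mul_add_inner (h : IsJohnDecomposition c u) (ρ : ℝ) (y : E) :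
    ∑ i, c i * ((1 - ⟪u i, y⟫) * (ρ + ⟪u i, y⟫)) = Module.finrank ℝ E * ρ - ‖y‖ ^ 2 := by
  have expand (i : ι) : c i * ((1 - ⟪u i, y⟫) * (ρ + ⟪u i, y⟫)) =
      c i * ρ + (1 - ρ) * (c i * ⟪u i, y⟫) - c i * (⟪u i, y⟫ * ⟪u i, y⟫) := by
    ring
  have first_moment : ∑ i, c i * ⟪u i, y⟫ = 0 := h.sum_mul_inner_map LinearMap.id y
  have second_moment : ∑ i, c i * (⟪u i, y⟫ * ⟪u i, y⟫) = ‖y‖ ^ 2 :=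
    (h.sum_mul_inner_mul_inner_map LinearMap.id y y).trans (real_inner_self_eq_norm_sq y)
  simp_rw [expand, sum_sub_distrib, sum_add_distrib, ← sum_mul, ← mul_sum, h.sum_weight,
    first_moment, second_moment, mul_zero, add_zero]

theorem trace_sq_le (h : IsJohnDecomposition c u) (A : E →ₗ[ℝ] E) {y : E} (hAy : 0 ≤ ⟪A y, y⟫)
    (hA : ∀ i, ⟪u i, y⟫ + ‖A (u i)‖ ≤ 1) :
    A.trace ℝ E ^ 2 ≤ (Module.finrank ℝ E : ℝ) ^ 2 - ‖y‖ ^ 2 := by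
  set s := A.trace ℝ E
  set ρ := √(s ^ 2 + ‖y‖ ^ 2) with hρ
  have sq_rho : ρ ^ 2 = s ^ 2 + ‖y‖ ^ 2 := Real.sq_sqrt (by positivity)
  have rho_add_nonneg : 0 ≤ ρ + s := by
    linarith [neg_abs_le s, Real.abs_le_sqrt (le_add_of_nonneg_right (sq_nonneg ‖y‖) :
      s ^ 2 ≤ s ^ 2 + ‖y‖ ^ 2)]
  have pointwise (i : ι) : ⟪A (u i), scaledBoost s y (u i)⟫ ≤ (1 - ⟪u i, y⟫) * (ρ + ⟪u i, y⟫) :=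
    calc ⟪A (u i), scaledBoost s y (u i)⟫
        ≤ ‖A (u i)‖ * ‖scaledBoost s y (u i)‖ := real_inner_le_norm _ _
      _ ≤ (1 - ⟪u i, y⟫) * ‖scaledBoost s y (u i)‖ := by gcongr; linarith [hA i]
      _ = (1 - ⟪u i, y⟫) * (ρ + ⟪u i, y⟫) := by rw [norm_scaledBoost s y (h.norm_eq_one i)]
  have averaged : s * s + ⟪A y, y⟫ / (ρ + s) ≤ Module.finrank ℝ E * ρ - ‖y‖ ^ 2 := by
    rw [hρ, ← h.sum_mul_inner_map_scaledBoost, ← h.sum_mul_one_sub_inner_mul_add_inner]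
    exact sum_le_sum fun i _ => mul_le_mul_of_nonneg_left (pointwise i) (h.weight_nonneg i)
  have sq_rho_le : ρ ^ 2 ≤ Module.finrank ℝ E * ρ := by
    linarith [div_nonneg hAy rho_add_nonneg]
  nlinarith [sq_nonneg (Module.finrank ℝ E - ρ)]

end IsJohnDecomposition

/-- The operator `∑ j, a j • w j ⊗ w j`, which is diagonal with eigenvalues `a j` along `w j` when
`w` is orthonormal. -/
noncomputable def diagonalOperator (w : κ → E) (a : κ → ℝ) : E →ₗ[ℝ] E :=
  ∑ j, a j • (InnerProductSpace.rankOne ℝ (w j) (w j)).toLinearMap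

lemma diagonalOperator_apply (w : κ → E) (a : κ → ℝ) (x : E) :
    diagonalOperator w a x = ∑ j, (a j * ⟪w j, x⟫) • w j := by
  simp [diagonalOperator, smul_smul]

lemma inner_diagonalOperator_self_nonneg (w : κ → E) {a : κ → ℝ} (ha : ∀ j, 0 ≤ a j) (x : E) :
    0 ≤ ⟪diagonalOperator w a x, x⟫ := by
  simp only [diagonalOperator_apply, sum_inner, real_inner_smul_left, mul_assoc]
  exact sum_nonneg fun j _ => mul_nonneg (ha j) (mul_self_nonneg _)

lemma norm_diagonalOperator_apply {w : κ → E} (hw : Orthonormal ℝ w) (a : κ → ℝ) (x : E) :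
    ‖diagonalOperator w a x‖ = √(∑ j, a j ^ 2 * ⟪x, w j⟫ ^ 2) := by
  rw [diagonalOperator_apply, norm_eq_sqrt_real_inner, hw.inner_sum]
  simp only [conj_trivial, ← sq, mul_pow, real_inner_comm]

lemma trace_diagonalOperator [FiniteDimensional ℝ E] {w : κ → E} (hw : Orthonormal ℝ w)
    (a : κ → ℝ) : (diagonalOperator w a).trace ℝ E = ∑ j, a j := by
  simp [diagonalOperator, InnerProductSpace.trace_rankOne, hw.norm_eq_one]

theorem stmt_14_general [FiniteDimensional ℝ E] {c : ι → ℝ} {u : ι → E}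
    (h : IsJohnDecomposition c u) (y : E) {w : κ → E} (hw : Orthonormal ℝ w) (α : κ → ℝ)
    (htouch : ∀ i, ⟪u i, y⟫ + √(∑ j, α j ^ 2 * ⟪u i, w j⟫ ^ 2) ≤ 1) :
    (∑ j, |α j|) ^ 2 ≤ (Module.finrank ℝ E : ℝ) ^ 2 - ‖y‖ ^ 2 := by
  rw [← trace_diagonalOperator hw]
  refine h.trace_sq_le _ (inner_diagonalOperator_self_nonneg w (fun j => abs_nonneg (α j)) y) ?_
  simpa only [norm_diagonalOperator_apply hw, sq_abs] using htouch

/-- Inequality (12) of Proposition 4: under John's conditions, if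
`⟪u i, y⟫ + √(∑ j, α j² ⟪u i, v j⟫²) ≤ 1` for every `i`, then
`(∑ j, α j)² ≤ n² − ‖y‖²`. -/
theorem stmt_14 {n m k : ℕ} (hn : 1 ≤ n) (hm : 1 ≤ m) (hk1 : 1 ≤ k) (hkn : k ≤ n)
    (u : Fin m → EuclideanSpace ℝ (Fin n)) (c : Fin m → ℝ)
    (hu : ∀ i, ‖u i‖ = 1) (hc : ∀ i, 0 < c i)
    (ha : ∑ i, c i • u i = 0)
    (hb : ∀ x : EuclideanSpace ℝ (Fin n), ∑ i, (c i * ⟪u i, x⟫) • u i = x)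
    (y : EuclideanSpace ℝ (Fin n))
    (v : OrthonormalBasis (Fin n) ℝ (EuclideanSpace ℝ (Fin n)))
    (α : Fin k → ℝ) (hα : ∀ j, 0 < α j)
    (htouch : ∀ i, ⟪u i, y⟫ +
      Real.sqrt (∑ j : Fin k, (α j) ^ 2 * ⟪u i, v (Fin.castLE hkn j)⟫ ^ 2) ≤ 1) :
    (∑ j, α j) ^ 2 ≤ (n : ℝ) ^ 2 - ‖y‖ ^ 2 := by
  have hJohn : IsJohnDecomposition c u := ⟨hu, fun i => (hc i).le, ha, hb⟩
  simpa [abs_of_pos (hα _)] using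
    stmt_14_general hJohn y (v.orthonormal.comp _ (Fin.castLE_injective hkn)) α htouch
end
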